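/- Let I and I' be joinable instances of Simultaneous FPQ-Ordering with join DAG I ⋈ I'. Then sol(I ⋈ I') = sol(I) ∩ sol(I'), under the identification of the sources of I and I' given by the bijection M. -/

import Mathlib

namespace Paper

/-! ### Cyclic orders -/

/-- An abstract cyclic order on (a subset of) `L`, given by a strict
betweenness relation. -/
structure CycOrder (L : Type) where
  btw : L → L → L → Prop

/-- The cyclic order induced by a list: `x, y, z` appear in this cyclic order. -/
def listBtw {L : Type} (l : List L) (x y z : L) : Prop :=
  ∃ (n : ℕ) (l₁ l₂ l₃ l₄ : List L),
    l.rotate n = l₁ ++ x :: (l₂ ++ y :: (l₃ ++ z :: l₄))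

/-- The cyclic order determined by a list. -/
def cycOfList {L : Type} (l : List L) : CycOrder L := ⟨listBtw l⟩

/-- `O₁` extends the image of `O₂` under the injection `φ`
(i.e. `φ(O₂)` is a suborder of `O₁`). -/
def CycOrder.Extends {L₁ L₂ : Type} (O₁ : CycOrder L₁) (φ : L₂ → L₁)
    (O₂ : CycOrder L₂) : Prop :=
  ∀ x y z, O₂.btw x y z → O₁.btw (φ x) (φ y) (φ z)

/-! ### FPQ-trees -/

/-- Kinds of inner nodes of an FPQ-tree: P-nodes, Q-nodes and F-nodes. -/
inductive NodeKind : Type | P | Q | F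
deriving DecidableEq

/-- FPQ-trees (hence also PQ-trees) whose leaves carry labels from `L`. -/
inductive FPQTree (L : Type) : Type
  | leaf : L → FPQTree L
  | node : NodeKind → List (FPQTree L) → FPQTree L

namespace FPQTree

/-- The list of leaf labels of an FPQ-tree. -/
def leaves {L : Type} : FPQTree L → List L
  | .leaf a => [a]
  | .node _ ts => (ts.attach.map (fun c => c.1.leaves)).flatten
decreasing_by
  have := List.sizeOf_lt_of_mem c.2
  simp only [FPQTree.node.sizeOf_spec]
  omega

end FPQTree

mutual
  /-- `Lin T l` : the linear order `l` of the leaves of `T` is one of the leaf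
  orders represented by `T`: children of P-nodes may be permuted arbitrarily,
  children of Q-nodes may be reversed, children of F-nodes are fixed. -/
  inductive FPQTree.Lin {L : Type} : FPQTree L → List L → Prop where
    | leaf (a : L) : FPQTree.Lin (.leaf a) [a]
    | pnode {ts ts' : List (FPQTree L)} {ls : List (List L)} :
        List.Perm ts' ts → FPQTree.LinSeq ts' ls → FPQTree.Lin (.node .P ts) ls.flatten
    | qnode {ts : List (FPQTree L)} {ls : List (List L)} :
        FPQTree.LinSeq ts ls → FPQTree.Lin (.node .Q ts) ls.flatten
    | qnodeRev {ts : List (FPQTree L)} {ls : List (List L)} :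
        FPQTree.LinSeq ts.reverse ls → FPQTree.Lin (.node .Q ts) ls.flatten
    | fnode {ts : List (FPQTree L)} {ls : List (List L)} :
        FPQTree.LinSeq ts ls → FPQTree.Lin (.node .F ts) ls.flatten

  /-- Pointwise lifting of `FPQTree.Lin` to lists of trees. -/
  inductive FPQTree.LinSeq {L : Type} : List (FPQTree L) → List (List L) → Prop where
    | nil : FPQTree.LinSeq [] []
    | cons {t : FPQTree L} {l : List L} {ts : List (FPQTree L)} {ls : List (List L)} :
        FPQTree.Lin t l → FPQTree.LinSeq ts ls → FPQTree.LinSeq (t :: ts) (l :: ls)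
end

namespace FPQTree

/-- The set of cyclic orders represented by an FPQ-tree. -/
def Represents {L : Type} (T : FPQTree L) (O : CycOrder L) : Prop :=
  ∃ l, T.Lin l ∧ O = cycOfList l

/-- The subtree of `T` at the position (sequence of child indices) `p`. -/
def subtree {L : Type} : FPQTree L → List ℕ → Option (FPQTree L)
  | t, [] => some t
  | .leaf _, _ :: _ => none
  | .node _ ts, i :: p =>
      match ts[i]? with
      | some c => c.subtree p
      | none => none

/-- There is a P-node of `T` at position `p`. -/
def PNodeAt {L : Type} (T : FPQTree L) (p : List ℕ) : Prop :=
  ∃ ts, T.subtree p = some (.node .P ts)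

/-- The leaf `x` lies below the `i`-th child of the node of `T` at position `p`. -/
def InBranch {L : Type} (T : FPQTree L) (p : List ℕ) (i : ℕ) (x : L) : Prop :=
  ∃ c, T.subtree (p ++ [i]) = some c ∧ x ∈ c.leaves

/-- Removing the node of `T` at position `p` leaves the leaves `x` and `y` in
the same component. -/
def SameSide {L : Type} (T : FPQTree L) (p : List ℕ) (x y : L) : Prop :=
  (∃ i, T.InBranch p i x ∧ T.InBranch p i y) ∨
    ((∀ i, ¬ T.InBranch p i x) ∧ (∀ i, ¬ T.InBranch p i y))

/-- Removing the node of `T` at position `p` makes the leaves `x`, `y`, `z`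
pairwise disconnected. -/
def Disconnects3 {L : Type} (T : FPQTree L) (p : List ℕ) (x y z : L) : Prop :=
  x ∈ T.leaves ∧ y ∈ T.leaves ∧ z ∈ T.leaves ∧
  ¬ T.SameSide p x y ∧ ¬ T.SameSide p x z ∧ ¬ T.SameSide p y z

end FPQTree

/-- The (inner) node of the child tree `Tchild` at position `q` *fixes* the
(inner) node of the parent tree `Tpar` at position `p`, along the injective
leaf mapping `φ : L(Tchild) → L(Tpar)`. -/
def FixesT {L : Type} (Tpar Tchild : FPQTree L) (φ : L → L) (p q : List ℕ) : Prop :=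
  ∃ x y z, Tchild.Disconnects3 q x y z ∧ Tpar.Disconnects3 p (φ x) (φ y) (φ z)

/-- The P-node of `Tnew` at position `pnew` *stems from* the P-node of `Told`
at position `pold` (where `Tnew` is a tree refining `Told` on the same leaves). -/
def StemsFrom {L : Type} (Tnew Told : FPQTree L) (pnew pold : List ℕ) : Prop :=
  Tnew.PNodeAt pnew ∧ Told.PNodeAt pold ∧
  ∃ x y z, Tnew.Disconnects3 pnew x y z ∧ Told.Disconnects3 pold x y z

end Paper

namespace Paper

/-! ### Instances of Simultaneous FPQ-Ordering -/

/-- An instance of Simultaneous FPQ-Ordering: a DAG whose nodes (indexed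
by `V`) are FPQ-trees with leaf labels in `L`; an arc is a triple
`(i, j, φ)` with tail `i`, head `j` and injective leaf map
`φ : L(tree j) → L(tree i)`. -/
structure SimFPQInstance (V L : Type) where
  tree : V → FPQTree L
  arcs : Set (V × V × (L → L))

namespace SimFPQInstance

variable {V L : Type}

/-- Well-formedness: trees have distinct leaves, arc maps are injective maps
from the leaves of the head to the leaves of the tail, and the arc relation
is acyclic (so the instance is a DAG). -/
def WF (I : SimFPQInstance V L) : Prop :=
  (∀ v, (I.tree v).leaves.Nodup) ∧
  (∀ a ∈ I.arcs, Set.InjOn a.2.2 {x | x ∈ (I.tree a.2.1).leaves} ∧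
      ∀ x ∈ (I.tree a.2.1).leaves, a.2.2 x ∈ (I.tree a.1).leaves) ∧
  (∀ v, ¬ Relation.TransGen (fun a b => ∃ φ, (a, b, φ) ∈ I.arcs) v v)

/-- `v` is a source of the DAG (no incoming arc). -/
def IsSource (I : SimFPQInstance V L) (v : V) : Prop :=
  ∀ u φ, (u, v, φ) ∉ I.arcs

/-- The parents of a node `v`. -/
def Parents (I : SimFPQInstance V L) (v : V) : Set V :=
  {u | ∃ φ, (u, v, φ) ∈ I.arcs}

/-- A solution of the instance: a represented cyclic order for every tree,
such that for every arc the order at the tail extends the image of the order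
at the head. -/
def Solution (I : SimFPQInstance V L) (O : V → CycOrder L) : Prop :=
  (∀ v, (I.tree v).Represents (O v)) ∧
  ∀ i j φ, (i, j, φ) ∈ I.arcs → CycOrder.Extends (O i) φ (O j)

/-- The set of P-nodes (positions) of the parent tree `u` that are fixed by the
node at position `p` of the tree of `v`, along some arc from `u` to `v`. -/
def FixSet (I : SimFPQInstance V L) (u v : V) (p : List ℕ) : Set (List ℕ) :=
  {r | (I.tree u).PNodeAt r ∧ ∃ φ, (u, v, φ) ∈ I.arcs ∧
        FixesT (I.tree u) (I.tree v) φ r p}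

/-- The children of `v` that fix the node at position `p` of the tree of `v`. -/
def fixingChildren (I : SimFPQInstance V L) (v : V) (p : List ℕ) : Set V :=
  {u | ∃ φ, (v, u, φ) ∈ I.arcs ∧ ∃ q, FixesT (I.tree v) (I.tree u) φ p q}

/-- `ω`: the number of children of `v` fixing the node at position `p`. -/
noncomputable def omega (I : SimFPQInstance V L) (v : V) (p : List ℕ) : ℕ :=
  (I.fixingChildren v p).ncard

/-- `fx` assigns to every P-node of the instance its fixedness, i.e. it
satisfies the defining recurrence of fixedness: for a P-node `μ` at position
`p` of the tree of `v`, if `v` is a source then `fixed μ = ω`; otherwise, with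
`F_u` the set of P-nodes of a parent `u` fixed by `μ`, we have `fixed μ = 0`
if some `F_u` is empty, and otherwise
`fixed μ = ω + ∑_{u parent} max_{ν ∈ F_u} (fixed ν - 1)`. -/
def IsFixednessAssignment (I : SimFPQInstance V L) (fx : V → List ℕ → ℤ) : Prop :=
  ∀ v p, (I.tree v).PNodeAt p →
    (I.IsSource v → fx v p = I.omega v p) ∧
    (¬ I.IsSource v →
      ((∃ u ∈ I.Parents v, I.FixSet u v p = ∅) → fx v p = 0) ∧
      ((∀ u ∈ I.Parents v, I.FixSet u v p ≠ ∅) →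
        fx v p = I.omega v p +
          ∑ᶠ u ∈ I.Parents v, sSup ((fun r => fx u r - 1) '' I.FixSet u v p)))

/-- The instance is `k`-fixed: every P-node of every tree has fixedness
at most `k`. -/
def kFixed (I : SimFPQInstance V L) (k : ℤ) : Prop :=
  ∀ fx, I.IsFixednessAssignment fx → ∀ v p, (I.tree v).PNodeAt p → fx v p ≤ k

/-- The instance has P-degree (at most) `k`: every node whose tree contains a
P-node has at most `k` parents. -/
def PDegree (I : SimFPQInstance V L) (k : ℕ) : Prop :=
  ∀ v, (∃ p, (I.tree v).PNodeAt p) → (I.Parents v).ncard ≤ k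

/-- The DAG has height (at most) `1`: there is no directed path of length two. -/
def Height1 (I : SimFPQInstance V L) : Prop :=
  ∀ u v w φ ψ, (u, v, φ) ∈ I.arcs → (v, w, ψ) ∈ I.arcs → False

end SimFPQInstance

/-- `Tres` represents exactly the cyclic orders represented by both `T₁`
and `T₂` (i.e. `Tres = T₁ ∩ T₂`), on the leaves of `T₁`. -/
def SemIntersection {L : Type} (T₁ T₂ Tres : FPQTree L) : Prop :=
  (∀ x, x ∈ Tres.leaves ↔ x ∈ T₁.leaves) ∧
  ∀ O, Tres.Represents O ↔ (T₁.Represents O ∧ T₂.Represents O)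

/-- `Tres = Tpar|_{φ(L(Tchild))} ∩ Tchild`: it represents exactly the orders
represented by `Tchild` whose image under `φ` can be extended to an order
represented by `Tpar`. -/
def IsProjIntersection {L : Type} (Tpar Tchild Tres : FPQTree L) (φ : L → L) : Prop :=
  (∀ x, x ∈ Tres.leaves ↔ x ∈ Tchild.leaves) ∧
  ∀ O, Tres.Represents O ↔
    (Tchild.Represents O ∧ ∃ Op, Tpar.Represents Op ∧ CycOrder.Extends Op φ O)

namespace SimFPQInstance

variable {V L : Type}

/-- `I'` is obtained from `I` by normalizing the single arc `a = (i, j, φ)`,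
i.e. by replacing the tree `T_j` with `T_i|_{φ(L(T_j))} ∩ T_j`. -/
def NormalizeArcStep (I I' : SimFPQInstance V L) (a : V × V × (L → L)) : Prop :=
  a ∈ I.arcs ∧ I'.arcs = I.arcs ∧
  (∀ v, v ≠ a.2.1 → I'.tree v = I.tree v) ∧
  IsProjIntersection (I.tree a.1) (I.tree a.2.1) (I'.tree a.2.1) a.2.2

/-- `I'` is the normalization of `I`: all arcs of `I` are normalized, one
after the other, in some top-down order. -/
def IsNormalization (I I' : SimFPQInstance V L) : Prop :=
  ∃ (as : List (V × V × (L → L))) (F : ℕ → SimFPQInstance V L),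
    as.Nodup ∧ (∀ a, a ∈ as ↔ a ∈ I.arcs) ∧
    (∀ (k l : ℕ) (hk : k < as.length) (hl : l < as.length),
        (as.get ⟨k, hk⟩).2.1 = (as.get ⟨l, hl⟩).1 → k < l) ∧
    F 0 = I ∧ F as.length = I' ∧
    ∀ (k : ℕ) (hk : k < as.length),
      NormalizeArcStep (F k) (F (k + 1)) (as.get ⟨k, hk⟩)

end SimFPQInstance

/-- Two instances are *joinable*: there is a bijection `M` between their
sources such that corresponding source trees have the same leaves. -/
def Joinable {V V' L : Type} (I : SimFPQInstance V L) (I' : SimFPQInstance V' L) : Prop :=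
  ∃ M : {v // I.IsSource v} ≃ {w // I'.IsSource w},
    ∀ s : {v // I.IsSource v}, ∀ x,
      x ∈ (I.tree s.1).leaves ↔ x ∈ (I'.tree (M s).1).leaves

/-- `J` is the join DAG `I ⋈ I'` of two joinable instances with source
bijection `M`: each pair of corresponding sources `T`, `M T` is replaced by the
single tree `T ∩ M T` (identifying the respective nodes of `I` and `I'`);
all other nodes and arcs are kept. -/
def IsJoin {V V' L : Type} (I : SimFPQInstance V L) (I' : SimFPQInstance V' L)
    (M : {v // I.IsSource v} ≃ {w // I'.IsSource w})
    (J : SimFPQInstance (V ⊕ {w : V' // ¬ I'.IsSource w}) L) : Prop :=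
  (∀ v : V, ¬ I.IsSource v → J.tree (Sum.inl v) = I.tree v) ∧
  (∀ s : {v // I.IsSource v},
      SemIntersection (I.tree s.1) (I'.tree (M s).1) (J.tree (Sum.inl s.1))) ∧
  (∀ w : {w : V' // ¬ I'.IsSource w}, J.tree (Sum.inr w) = I'.tree w.1) ∧
  (J.arcs =
    {a | (∃ i j φ, (i, j, φ) ∈ I.arcs ∧ a = (Sum.inl i, Sum.inl j, φ)) ∨
      (∃ (i j : V') (φ : L → L) (hi : ¬ I'.IsSource i) (hj : ¬ I'.IsSource j),
        (i, j, φ) ∈ I'.arcs ∧ a = (Sum.inr ⟨i, hi⟩, Sum.inr ⟨j, hj⟩, φ)) ∨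
      (∃ (s : {w // I'.IsSource w}) (j : V') (φ : L → L) (hj : ¬ I'.IsSource j),
        (s.1, j, φ) ∈ I'.arcs ∧ a = (Sum.inl (M.symm s).1, Sum.inr ⟨j, hj⟩, φ))})

end Paper

namespace Paper

/-! The nodes of `I'` embed into those of the join, a source `M s` landing on the node `s` of `I`.
Along this embedding and the inclusion of the nodes of `I`, the arcs of the join are exactly those
of `I` and of `I'`, and its trees represent exactly the orders that `I` and `I'` allow. So a
solution of the join is a family of orders restricting to a solution of `I` and to one of `I'`; and
solutions of `I` and `I'` glue to such a family as soon as they agree on the identified sources. -/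

section JoinNode

variable {V V' : Type*} {p : V → Prop} {q : V' → Prop} (M : {v // p v} ≃ {w // q w})

open Classical in
/-- The embedding of `V'` into the union of `V` and `V'` glued along the partial bijection `M`. The
glued union is encoded as `V ⊕ {w // ¬ q w}`, so that identified nodes are represented in `V`. -/
noncomputable def joinNode (w : V') : V ⊕ {w // ¬ q w} :=
  if hw : q w then Sum.inl (M.symm ⟨w, hw⟩).1 else Sum.inr ⟨w, hw⟩

theorem joinNode_coe (t : {w // q w}) : joinNode M t.1 = Sum.inl (M.symm t).1 :=
  dif_pos t.2

theorem joinNode_coe_apply (s : {v // p v}) : joinNode M (M s).1 = Sum.inl s.1 := by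
  rw [joinNode_coe, M.symm_apply_apply]

theorem joinNode_of_not {w : V'} (hw : ¬ q w) : joinNode M w = Sum.inr ⟨w, hw⟩ :=
  dif_neg hw

variable {M} in
theorem sumElim_comp_joinNode {α : Type*} {g : V → α} {g' : V' → α}
    (hagree : ∀ s : {v // p v}, g s.1 = g' (M s).1) :
    Sum.elim g (g' ∘ Subtype.val) ∘ joinNode M = g' := by
  funext w
  by_cases hw : q w
  · obtain ⟨s, hs⟩ := M.surjective ⟨w, hw⟩
    obtain rfl : (M s).1 = w := congrArg Subtype.val hs
    rw [Function.comp_apply, joinNode_coe_apply, Sum.elim_inl, hagree]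
  · rw [Function.comp_apply, joinNode_of_not M hw, Sum.elim_inr, Function.comp_apply]

end JoinNode

theorem SimFPQInstance.not_isSource_of_mem_arcs {V L : Type} {I : SimFPQInstance V L} {u v : V}
    {φ : L → L} (h : (u, v, φ) ∈ I.arcs) : ¬ I.IsSource v :=
  fun hv => hv u φ h

/-- `sol(I)` read along a family `s` of nodes: the tuples of cyclic orders at the nodes `s i` that
extend to a solution of `I`. The paper's `sol(I)` is the case where `s` enumerates the sources. -/
def SimFPQInstance.solAlong {V L : Type} {ι : Type*} (I : SimFPQInstance V L) (s : ι → V) :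
    Set (ι → CycOrder L) :=
  {f | ∃ O, I.Solution O ∧ ∀ i, O (s i) = f i}

namespace IsJoin

variable {V V' L : Type} {I : SimFPQInstance V L} {I' : SimFPQInstance V' L}
  {M : {v // I.IsSource v} ≃ {w // I'.IsSource w}}
  {J : SimFPQInstance (V ⊕ {w : V' // ¬ I'.IsSource w}) L}

theorem forall_arcs_iff (hJ : IsJoin I I' M J)
    {P : V ⊕ {w : V' // ¬ I'.IsSource w} → V ⊕ {w : V' // ¬ I'.IsSource w} → (L → L) → Prop} :
    (∀ x y φ, (x, y, φ) ∈ J.arcs → P x y φ) ↔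
      (∀ i j φ, (i, j, φ) ∈ I.arcs → P (Sum.inl i) (Sum.inl j) φ) ∧
      ∀ i j φ, (i, j, φ) ∈ I'.arcs → P (joinNode M i) (joinNode M j) φ := by
  obtain ⟨-, -, -, arcs_eq⟩ := hJ
  rw [arcs_eq]
  constructor
  · refine fun h => ⟨fun i j φ ha => h _ _ _ (.inl ⟨i, j, φ, ha, rfl⟩), fun i j φ ha => ?_⟩
    have hj := SimFPQInstance.not_isSource_of_mem_arcs ha
    rw [joinNode_of_not M hj]
    by_cases hi : I'.IsSource i
    · rw [joinNode_coe M ⟨i, hi⟩]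
      exact h _ _ _ (.inr (.inr ⟨⟨i, hi⟩, j, φ, hj, ha, rfl⟩))
    · rw [joinNode_of_not M hi]
      exact h _ _ _ (.inr (.inl ⟨i, j, φ, hi, hj, ha, rfl⟩))
  · rintro ⟨h, h'⟩ x y φ (⟨i, j, _, ha, ⟨⟩⟩ | ⟨i, j, _, hi, hj, ha, ⟨⟩⟩ | ⟨t, j, _, hj, ha, ⟨⟩⟩)
    · exact h i j φ ha
    · simpa only [joinNode_of_not M hi, joinNode_of_not M hj] using h' i j φ ha
    · simpa only [joinNode_coe, joinNode_of_not M hj] using h' t.1 j φ ha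

theorem forall_represents_iff (hJ : IsJoin I I' M J)
    {O : V ⊕ {w : V' // ¬ I'.IsSource w} → CycOrder L} :
    (∀ x, (J.tree x).Represents (O x)) ↔
      (∀ v, (I.tree v).Represents (O (Sum.inl v))) ∧
      ∀ w, (I'.tree w).Represents (O (joinNode M w)) := by
  obtain ⟨tree_inl, tree_source, tree_inr, -⟩ := hJ
  have source_iff (s : {v // I.IsSource v}) : (J.tree (Sum.inl s.1)).Represents (O (Sum.inl s.1)) ↔
      (I.tree s.1).Represents (O (Sum.inl s.1)) ∧
      (I'.tree (M s).1).Represents (O (joinNode M (M s).1)) := by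
    rw [joinNode_coe_apply]
    exact (tree_source s).2 _
  constructor
  · refine fun h => ⟨fun v => ?_, fun w => ?_⟩
    · by_cases hv : I.IsSource v
      · exact ((source_iff ⟨v, hv⟩).1 (h _)).1
      · exact tree_inl v hv ▸ h (Sum.inl v)
    · by_cases hw : I'.IsSource w
      · simpa only [M.apply_symm_apply] using ((source_iff (M.symm ⟨w, hw⟩)).1 (h _)).2
      · rw [joinNode_of_not M hw]
        exact tree_inr ⟨w, hw⟩ ▸ h (Sum.inr ⟨w, hw⟩)
  · rintro ⟨h, h'⟩ (v | w)
    · by_cases hv : I.IsSource v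
      · exact (source_iff ⟨v, hv⟩).2 ⟨h v, h' _⟩
      · exact tree_inl v hv ▸ h v
    · rw [tree_inr w, ← joinNode_of_not M w.2]
      exact h' w.1

theorem solution_iff (hJ : IsJoin I I' M J)
    {O : V ⊕ {w : V' // ¬ I'.IsSource w} → CycOrder L} :
    J.Solution O ↔ I.Solution (O ∘ Sum.inl) ∧ I'.Solution (O ∘ joinNode M) :=
  (and_congr hJ.forall_represents_iff hJ.forall_arcs_iff).trans and_and_and_comm

end IsJoin

theorem join_sol_eq_sol_inter_sol_general
    {V V' L : Type} {I : SimFPQInstance V L} {I' : SimFPQInstance V' L}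
    {M : {v // I.IsSource v} ≃ {w // I'.IsSource w}}
    {J : SimFPQInstance (V ⊕ {w : V' // ¬ I'.IsSource w}) L} (hJ : IsJoin I I' M J) :
    J.solAlong (fun s : {v // I.IsSource v} => Sum.inl s.1) =
      I.solAlong (fun s : {v // I.IsSource v} => s.1) ∩ I'.solAlong (fun s => (M s).1) := by
  ext f
  constructor
  · rintro ⟨O, hO, hf⟩
    obtain ⟨hI, hI'⟩ := hJ.solution_iff.1 hO
    refine ⟨⟨O ∘ Sum.inl, hI, hf⟩, O ∘ joinNode M, hI', fun s => ?_⟩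
    rw [Function.comp_apply, joinNode_coe_apply, hf]
  · rintro ⟨⟨O, hO, hf⟩, O', hO', hf'⟩
    have hagree (s : {v // I.IsSource v}) : O s.1 = O' (M s).1 := (hf s).trans (hf' s).symm
    refine ⟨Sum.elim O (O' ∘ Subtype.val), hJ.solution_iff.2 ⟨hO, ?_⟩, hf⟩
    rwa [sumElim_comp_joinNode hagree]

/-- Let `I` and `I'` be joinable instances of Simultaneous
FPQ-Ordering with join DAG `J = I ⋈ I'`.  Then `sol(I ⋈ I') = sol(I) ∩ sol(I')`,
under the identification of the sources of `I` and `I'` given by the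
bijection `M`. -/
theorem join_sol_eq_sol_inter_sol
    {V V' L : Type} (I : SimFPQInstance V L) (I' : SimFPQInstance V' L)
    (hWF : I.WF) (hWF' : I'.WF)
    (M : {v // I.IsSource v} ≃ {w // I'.IsSource w})
    (hM : ∀ s : {v // I.IsSource v}, ∀ x,
      x ∈ (I.tree s.1).leaves ↔ x ∈ (I'.tree (M s).1).leaves)
    (J : SimFPQInstance (V ⊕ {w : V' // ¬ I'.IsSource w}) L)
    (hJ : IsJoin I I' M J) :
    ∀ f : {v // I.IsSource v} → CycOrder L,
      (∃ O, J.Solution O ∧ ∀ s : {v // I.IsSource v}, O (Sum.inl s.1) = f s) ↔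
      ((∃ O, I.Solution O ∧ ∀ s : {v // I.IsSource v}, O s.1 = f s) ∧
        (∃ O', I'.Solution O' ∧ ∀ s : {v // I.IsSource v}, O' (M s).1 = f s)) :=
  Set.ext_iff.1 (join_sol_eq_sol_inter_sol_general hJ)

end Paper
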